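/- Let n, s, q be integers with 1 ≤ q ≤ s ≤ n, let M ≥ 0, and let a, a' ∈ ℝ^n agree at every coordinate except possibly one coordinate i₀, with |a_{i₀} − a'_{i₀}| ≤ M. Then | (1/q) ∑_{j=1}^{n} γ_j a_{(j)} − (1/q) ∑_{j=1}^{n} γ_j a'_{(j)} | ≤ (s/q)·(M/n). (This is the bounded-differences property of the ordered empirical loss used to apply McDiarmid's inequality in the proof of Theorem 3.) -/

import Mathlib

/-- `sortDesc a` is the vector `a : Fin n → ℝ` sorted in nonincreasing order (with multiplicity). -/
noncomputable def sortDesc {n : ℕ} (a : Fin n → ℝ) : Fin n → ℝ :=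
  fun j => a (Tuple.sort (fun i => -a i) j)

/-- `gammaR n s q j` is the coefficient `γ_{j+1} = (∑_{l=0}^{q-1} C(j, l)·C(n-1-j, s-l-1)) / C(n,s)`
(with the `Fin n` index `j` corresponding to the paper's index `j+1 ∈ {1,…,n}`). -/
noncomputable def gammaR (n s q : ℕ) (j : Fin n) : ℝ :=
  ((∑ l ∈ Finset.range q,
      Nat.choose j.val l * Nat.choose (n - 1 - j.val) (s - l - 1) : ℕ) : ℝ)
    / (Nat.choose n s : ℝ)

/-!
Sorting is monotone and preserves sums. Comparing `a` and `b` with their pointwise supremum, this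
makes sorting a contraction in `ℓ¹`: `∑ |a_(j) - b_(j)| ≤ ∑ |a_i - b_i|`. By the Vandermonde
identity each weight `γ_j` is at most `C(n-1, s-1) / C(n, s) = s / n`, so the weighted sums differ
by at most `s / n` times the `ℓ¹` distance of `a` and `b`.
-/

theorem exists_le_and_le_apply_of_injective {α : Type*} [LinearOrder α] [LocallyFiniteOrderBot α]
    {f : α → α} (hf : f.Injective) (j : α) : ∃ i ≤ j, j ≤ f i := by
  by_contra! hlt
  have hmaps : Set.MapsTo f (Finset.Iic j) (Finset.Iio j) := fun i hi =>
    Finset.mem_coe.2 (Finset.mem_Iio.2 (hlt i (Finset.mem_Iic.1 hi)))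
  have hcard : (Finset.Iio j).card < (Finset.Iic j).card :=
    Finset.card_lt_card <| (Finset.ssubset_iff_of_subset Finset.Iio_subset_Iic_self).2
      ⟨j, Finset.mem_Iic.2 le_rfl, Finset.notMem_Iio_self⟩
  exact hcard.not_ge (Finset.card_le_card_of_injOn f hmaps hf.injOn)

theorem abs_sum_mul_sub_sum_mul_le {ι R : Type*} [Ring R] [LinearOrder R] [IsOrderedRing R]
    (t : Finset ι) {w : ι → R} {c : R} (hw : ∀ i ∈ t, |w i| ≤ c) (x y : ι → R) :
    |∑ i ∈ t, w i * x i - ∑ i ∈ t, w i * y i| ≤ c * ∑ i ∈ t, |x i - y i| := by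
  calc |∑ i ∈ t, w i * x i - ∑ i ∈ t, w i * y i|
      = |∑ i ∈ t, w i * (x i - y i)| := by simp only [mul_sub, Finset.sum_sub_distrib]
    _ ≤ ∑ i ∈ t, |w i * (x i - y i)| := Finset.abs_sum_le_sum_abs _ _
    _ ≤ ∑ i ∈ t, c * |x i - y i| := Finset.sum_le_sum fun i hi => by
        rw [abs_mul]
        exact mul_le_mul_of_nonneg_right (hw i hi) (abs_nonneg _)
    _ = c * ∑ i ∈ t, |x i - y i| := (Finset.mul_sum _ _ _).symm

section sortDesc

variable {n : ℕ}

theorem antitone_sortDesc (a : Fin n → ℝ) : Antitone (sortDesc a) := fun _ _ hij =>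
  neg_le_neg_iff.1 (Tuple.monotone_sort (fun i => -a i) hij)

theorem sum_sortDesc (a : Fin n → ℝ) : ∑ j, sortDesc a j = ∑ i, a i :=
  Equiv.sum_comp (Tuple.sort fun i => -a i) a

theorem monotone_sortDesc : Monotone (sortDesc : (Fin n → ℝ) → Fin n → ℝ) := by
  intro a b hab j
  let σ := Tuple.sort fun i => -a i
  let τ := Tuple.sort fun i => -b i
  -- Pigeonhole: the entries of `a` up to rank `j` cannot all have rank `< j` in `b`.
  obtain ⟨i, hij, hji⟩ := exists_le_and_le_apply_of_injective (σ.trans τ.symm).injective j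
  calc sortDesc a j ≤ sortDesc a i := antitone_sortDesc a hij
    _ ≤ b (σ i) := hab (σ i)
    _ = sortDesc b (τ.symm (σ i)) := congrArg b (τ.apply_symm_apply (σ i)).symm
    _ ≤ sortDesc b j := antitone_sortDesc b hji

theorem sum_abs_sortDesc_sub_le (a b : Fin n → ℝ) :
    ∑ j, |sortDesc a j - sortDesc b j| ≤ ∑ i, |a i - b i| := by
  have ha : sortDesc a ≤ sortDesc (a ⊔ b) := monotone_sortDesc le_sup_left
  have hb : sortDesc b ≤ sortDesc (a ⊔ b) := monotone_sortDesc le_sup_right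
  calc ∑ j, |sortDesc a j - sortDesc b j|
      ≤ ∑ j, (2 * sortDesc (a ⊔ b) j - sortDesc a j - sortDesc b j) :=
        Finset.sum_le_sum fun j _ => abs_le.2 ⟨by linarith [hb j], by linarith [ha j]⟩
    _ = ∑ i, (2 * (a ⊔ b) i - a i - b i) := by
        simp only [Finset.sum_sub_distrib, ← Finset.mul_sum, sum_sortDesc]
    _ = ∑ i, |a i - b i| := Finset.sum_congr rfl fun i _ => by
        have hsup := two_nsmul_sup_eq_add_add_abs_sub (b i) (a i)
        rw [two_nsmul, sup_comm] at hsup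
        rw [Pi.sup_apply]
        linarith

end sortDesc

theorem sum_range_choose_mul_choose_le (m k : ℕ) {q r : ℕ} (hqr : q ≤ r + 1) :
    ∑ l ∈ Finset.range q, m.choose l * k.choose (r - l) ≤ (m + k).choose r := by
  rw [Nat.add_choose_eq, Finset.Nat.sum_antidiagonal_eq_sum_range_succ_mk]
  exact Finset.sum_le_sum_of_subset (Finset.range_mono hqr)

theorem gammaR_nonneg (n s q : ℕ) (j : Fin n) : 0 ≤ gammaR n s q j := by
  unfold gammaR
  positivity

theorem gammaR_le {n s q : ℕ} (hs : 1 ≤ s) (hqs : q ≤ s) (hsn : s ≤ n) (j : Fin n) :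
    gammaR n s q j ≤ (s : ℝ) / n := by
  obtain ⟨r, rfl⟩ := Nat.exists_eq_add_of_le' hs
  obtain ⟨m, rfl⟩ := Nat.exists_eq_add_of_le' (hs.trans hsn)
  have hvandermonde : ∑ l ∈ Finset.range q, (j : ℕ).choose l * (m - j).choose (r - l)
      ≤ m.choose r := by
    simpa only [Nat.add_sub_cancel' j.is_le] using
      sum_range_choose_mul_choose_le (j : ℕ) (m - j) hqs
  have hchoose : (0 : ℝ) < (m + 1).choose (r + 1) := mod_cast Nat.choose_pos hsn
  calc gammaR (m + 1) (r + 1) q j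
      = (∑ l ∈ Finset.range q, (j : ℕ).choose l * (m - j).choose (r - l) : ℕ)
          / ((m + 1).choose (r + 1) : ℝ) := by
        simp only [gammaR, Nat.add_sub_cancel, Nat.sub_right_comm (r + 1) _ 1]
    _ ≤ m.choose r / ((m + 1).choose (r + 1) : ℝ) := by gcongr
    _ = ((r + 1 : ℕ) : ℝ) / (m + 1 : ℕ) := by
        rw [div_eq_div_iff hchoose.ne' (by positivity)]
        exact_mod_cast (mul_comm _ _).trans ((Nat.add_one_mul_choose_eq m r).trans (mul_comm _ _))

theorem stmt_18_general (n s q : ℕ) (hq : 1 ≤ q) (hqs : q ≤ s) (hsn : s ≤ n)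
    (M : ℝ) (a a' : Fin n → ℝ) (h : ∑ i, |a i - a' i| ≤ M) :
    |(1 / (q : ℝ)) * ∑ j : Fin n, gammaR n s q j * sortDesc a j
        - (1 / (q : ℝ)) * ∑ j : Fin n, gammaR n s q j * sortDesc a' j|
      ≤ ((s : ℝ) / (q : ℝ)) * (M / (n : ℝ)) := by
  have hgamma (j : Fin n) : |gammaR n s q j| ≤ (s : ℝ) / n := by
    rw [abs_of_nonneg (gammaR_nonneg n s q j)]
    exact gammaR_le (hq.trans hqs) hqs hsn j
  rw [← mul_sub, abs_mul, abs_of_nonneg (by positivity)]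
  calc 1 / (q : ℝ) * |∑ j, gammaR n s q j * sortDesc a j - ∑ j, gammaR n s q j * sortDesc a' j|
      ≤ 1 / (q : ℝ) * (s / n * ∑ j, |sortDesc a j - sortDesc a' j|) := by
        gcongr
        exact abs_sum_mul_sub_sum_mul_le Finset.univ (fun j _ => hgamma j) _ _
    _ ≤ 1 / (q : ℝ) * (s / n * M) := by
        gcongr
        exact (sum_abs_sortDesc_sub_le a a').trans h
    _ = s / q * (M / n) := by ring

/-- bounded-differences property of the ordered empirical loss, used for
McDiarmid's inequality in the proof of Theorem 3. If `a, a' ∈ ℝⁿ` agree except possibly at one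
coordinate `i₀`, where they differ by at most `M`, then the ordered `γ`-weighted averages differ
by at most `(s/q)·(M/n)`. -/
theorem stmt_18 (n s q : ℕ) (hq : 1 ≤ q) (hqs : q ≤ s) (hsn : s ≤ n)
    (M : ℝ) (hM : 0 ≤ M) (a a' : Fin n → ℝ) (i₀ : Fin n)
    (h : ∀ i, i ≠ i₀ → a i = a' i) (hi₀ : |a i₀ - a' i₀| ≤ M) :
    |(1 / (q : ℝ)) * ∑ j : Fin n, gammaR n s q j * sortDesc a j
        - (1 / (q : ℝ)) * ∑ j : Fin n, gammaR n s q j * sortDesc a' j|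
      ≤ ((s : ℝ) / (q : ℝ)) * (M / (n : ℝ)) :=
  stmt_18_general n s q hq hqs hsn M a a' <| by
    rwa [Fintype.sum_eq_single i₀ fun i hi => by rw [h i hi, sub_self, abs_zero]]
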